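/- For every non-negative integer m, the integer 4m + 1 can be written as a sum of three squares a² + b² + c² in which a is even and b, c have different parity. -/

import Mathlib

/-!
A symmetric bilinear form on a free `ℤ`-module of rank at most five that is positive definite and
of determinant one has an orthonormal basis. Indeed Hermite's inequality yields a vector `v` with
`B v v = 1`; the module is then the orthogonal sum of `ℤ v` and the kernel of `B v`, on which the
form is again positive definite of determinant one.

If `n ≡ 1 (mod 4)`, Dirichlet's theorem gives a prime `p` and some `d ≡ 3 (mod 8)` with
`2 p + 1 = d n`, and quadratic reciprocity makes `-d` a square modulo `2 p`. From a solution of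
`t ^ 2 + d = 2 p a` one writes down a ternary form of the above kind that represents `n`, so `n` is
a sum of three squares. Modulo four, exactly one of them is odd.
-/

open Module
open NumberTheorySymbols
open LinearMap (BilinForm ker)
open LinearMap.BilinForm (linMulLin toMatrix)

section CommRing

variable {R M : Type*} [CommRing R] [AddCommGroup M] [Module R M]

theorem apply_zero_mul_det_chio_condensation {n : ℕ} (A : Matrix (Fin (n + 1)) (Fin (n + 1)) R) :
    A 0 0 * (Matrix.of fun i j : Fin n ↦ A 0 0 * A i.succ j.succ - A i.succ 0 * A 0 j.succ).det =
      A 0 0 ^ n * A.det := by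
  let scale : Fin (n + 1) → R := Fin.cons 1 fun _ ↦ A 0 0
  let multiple : Fin (n + 1) → R := Fin.cons 0 fun i ↦ -A i.succ 0
  let eliminated : Matrix (Fin (n + 1)) (Fin (n + 1)) R :=
    Matrix.of fun i j ↦ scale i * A i j + multiple i * A 0 j
  have det_eliminated : eliminated.det = A 0 0 ^ n * A.det := by
    rw [Matrix.det_eq_of_forall_row_eq_smul_add_const (B := Matrix.of fun i j ↦ scale i * A i j)
      multiple 0 rfl fun i j ↦ by simp [eliminated, scale], Matrix.det_mul_column]
    simp [scale, Fin.prod_univ_succ]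
  rw [← det_eliminated, Matrix.det_succ_column_zero, Fin.sum_univ_succ, Finset.sum_eq_zero]
  · simp [eliminated, scale, multiple, Matrix.submatrix, sub_eq_add_neg]
  · intro i _
    simp [eliminated, scale, multiple, mul_comm]

/-- If `f v = 1`, then `v` followed by a basis of the kernel of `f` is a basis of the whole module.
This is the splitting along which the rank is lowered in inductions. -/
noncomputable def basisConsKer {n : ℕ} {f : Dual R M} {v : M} (hv : f v = 1)
    (b : Basis (Fin n) R (ker f)) : Basis (Fin (n + 1)) R M :=
  Basis.mkFinCons v b
    (fun c x hx h ↦ by simpa [hv, LinearMap.mem_ker.1 hx] using congrArg f h)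
    (fun z ↦ ⟨-f z, by simp [hv]⟩)

@[simp]
theorem coe_basisConsKer {n : ℕ} {f : Dual R M} {v : M} (hv : f v = 1)
    (b : Basis (Fin n) R (ker f)) :
    ⇑(basisConsKer hv b) = Fin.cons v ((↑) ∘ b) :=
  Basis.coe_mkFinCons ..

/-- The Schur complement of the vector `v` in the form `B`, scaled by `B v v` so that no division is
needed: up to this factor it is `B` after projecting away from `v`. -/
def schurForm (B : BilinForm R M) (v : M) : BilinForm R M :=
  B v v • B - linMulLin (B.flip v) (B v)

theorem schurForm_apply (B : BilinForm R M) (v x y : M) :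
    schurForm B v x y = B v v * B x y - B x v * B v y := by
  simp [schurForm]

theorem isSymm_schurForm {B : BilinForm R M} (hB : B.IsSymm) (v : M) : (schurForm B v).IsSymm :=
  ⟨fun x y ↦ by simp only [schurForm_apply, hB.eq x y, hB.eq x v, hB.eq v y, mul_comm]⟩

theorem apply_mul_det_toMatrix_schurForm {n : ℕ} (B : BilinForm R M) {f : Dual R M} {v : M}
    (hv : f v = 1) (b : Basis (Fin n) R (ker f)) :
    B v v * (toMatrix b ((schurForm B v).restrict (ker f))).det =
      B v v ^ n * (toMatrix (basisConsKer hv b) B).det := by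
  convert! apply_zero_mul_det_chio_condensation (toMatrix (basisConsKer hv b) B) using 3
  · simp
  · ext i j
    simp [schurForm_apply]
  · simp

/-- A vector is primitive if some linear functional maps it to `1`. In a finite free module over a
principal ideal domain these are the vectors that belong to a basis. -/
def IsPrimitiveVector (R : Type*) {M : Type*} [CommRing R] [AddCommGroup M] [Module R M]
    (v : M) : Prop :=
  ∃ f : Dual R M, f v = 1

theorem isPrimitiveVector_basis {ι : Type*} (b : Basis ι R M) (i : ι) :
    IsPrimitiveVector R (b i) :=
  ⟨b.coord i, by simp⟩

theorem IsPrimitiveVector.add_smul {f : Dual R M} {v : M} (hv : f v = 1) {x : ker f}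
    (hx : IsPrimitiveVector R x) (c : R) : IsPrimitiveVector R ((x : M) + c • v) := by
  obtain ⟨g, hg⟩ := hx
  let proj : M →ₗ[R] ker f :=
    (LinearMap.id - f.smulRight v).codRestrict (ker f) fun y ↦ by simp [hv]
  have proj_apply (y : M) : (proj y : M) = y - f y • v := rfl
  have hproj : proj (x + c • v) = x := Subtype.ext <| by simp [proj_apply, hv]
  exact ⟨g ∘ₗ proj, by rw [LinearMap.comp_apply, hproj, hg]⟩

theorem IsPrimitiveVector.ne_zero [Nontrivial R] {v : M} (hv : IsPrimitiveVector R v) : v ≠ 0 := by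
  rintro rfl
  obtain ⟨f, hf⟩ := hv
  simp at hf

theorem nonempty_basis_ker [IsDomain R] [IsPrincipalIdealRing R] {n : ℕ}
    (b : Basis (Fin (n + 1)) R M) {f : Dual R M} {v : M} (hv : f v = 1) :
    Nonempty (Basis (Fin n) R (ker f)) := by
  have := Module.Free.of_basis b
  have := Module.Finite.of_basis b
  let c := finBasis R (ker f)
  have h : n = finrank R (ker f) := by
    simpa [finrank_eq_card_basis b] using finrank_eq_card_basis (basisConsKer hv c)
  exact ⟨c.reindex (finCongr h.symm)⟩

end CommRing

section IntegralLattice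

variable {M : Type*} [AddCommGroup M]

theorem det_toMatrix_eq_det_toMatrix {ι : Type*} [Fintype ι] [DecidableEq ι]
    (B : BilinForm ℤ M) (b c : Basis ι ℤ M) :
    (toMatrix b B).det = (toMatrix c B).det := by
  have hunit : IsUnit (b.toMatrix c).det := by
    rw [← Basis.det_apply]
    exact b.isUnit_det c
  rw [← LinearMap.BilinForm.toMatrix_mul_basis_toMatrix b c B, Matrix.det_mul, Matrix.det_mul,
    Matrix.det_transpose, mul_right_comm, Int.isUnit_mul_self hunit, one_mul]

theorem exists_two_mul_abs_add_mul_le {m : ℤ} (hm : 0 < m) (u : ℤ) :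
    ∃ k : ℤ, 2 * |u + k * m| ≤ m := by
  lift m to ℕ using hm.le
  have hm : 0 < m := by exact_mod_cast hm
  refine ⟨-u.bdiv m, ?_⟩
  have hu : u + -u.bdiv m * m = u.bmod m := by linear_combination -Int.bdiv_add_bmod' u m
  have lower := Int.le_bmod (x := u) hm
  have upper := Int.bmod_le (x := u) hm
  rw [hu, abs_eq_max_neg]
  omega

variable {B : BilinForm ℤ M}

theorem exists_isPrimitiveVector_forall_le (hB : B.toQuadraticMap.PosDef)
    (h : ∃ v : M, IsPrimitiveVector ℤ v) :
    ∃ v, IsPrimitiveVector ℤ v ∧ ∀ w, IsPrimitiveVector ℤ w → B v v ≤ B w w := by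
  obtain ⟨v, hv, hmin⟩ := exists_minimalFor_of_wellFoundedLT _ (fun v ↦ (B v v).toNat) h
  refine ⟨v, hv, fun w hw ↦ ?_⟩
  have hw_nonneg : 0 ≤ B w w := hB.nonneg w
  rcases le_total (B v v).toNat (B w w).toNat with hle | hle
  · omega
  · have : (B v v).toNat ≤ (B w w).toNat := hmin hw hle
    omega

theorem posDef_restrict_schurForm [IsTorsionFree ℤ M] (hsymm : B.IsSymm)
    (hB : B.toQuadraticMap.PosDef) {f : Dual ℤ M} {v : M} (hv : f v = 1) :
    ((schurForm B v).restrict (ker f)).toQuadraticMap.PosDef := by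
  intro x hx
  have hvpos : 0 < B v v := hB v (IsPrimitiveVector.ne_zero ⟨f, hv⟩)
  have hne : B v v • (x : M) - B x v • v ≠ 0 := by
    intro h
    have hcoeff : B x v = 0 := by simpa [hv] using congrArg f h
    simp [hcoeff, hvpos.ne', hx] at h
  refine pos_of_mul_pos_right (a := B v v) ?_ hvpos.le
  convert! hB _ hne using 1
  simp only [LinearMap.BilinMap.toQuadraticMap_apply, LinearMap.BilinForm.restrict_apply,
    LinearMap.domRestrict_apply, schurForm_apply, hsymm.eq v x, map_sub, map_smul,
    LinearMap.sub_apply, LinearMap.smul_apply, smul_eq_mul]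
  ring

theorem three_mul_sq_le_of_forall_le (hsymm : B.IsSymm) (hB : B.toQuadraticMap.PosDef)
    {f : Dual ℤ M} {v : M} (hv : f v = 1) (hmin : ∀ w, IsPrimitiveVector ℤ w → B v v ≤ B w w)
    {x : ker f} (hx : IsPrimitiveVector ℤ x) :
    3 * B v v ^ 2 ≤ 4 * schurForm B v x x := by
  have hvpos : 0 < B v v := hB v (IsPrimitiveVector.ne_zero ⟨f, hv⟩)
  obtain ⟨k, hk⟩ := exists_two_mul_abs_add_mul_le hvpos (B x v)
  have hmin_w : B v v ≤ B (x + k • v) (x + k • v) := hmin _ (hx.add_smul hv k)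
  have hexpand : B v v * B (x + k • v) (x + k • v) =
      schurForm B v x x + (B x v + k * B v v) ^ 2 := by
    simp only [schurForm_apply, map_add, map_smul, LinearMap.add_apply, LinearMap.smul_apply,
      smul_eq_mul, hsymm.eq v x]
    ring
  have hsize : (2 * (B x v + k * B v v)) ^ 2 ≤ B v v ^ 2 :=
    sq_le_sq.2 (by rwa [abs_mul, abs_two, abs_of_pos hvpos])
  linarith [mul_le_mul_of_nonneg_left hmin_w hvpos.le]

-- The induction passes to the Schur complement of the minimal vector `v`, on whose primitive
-- vectors minimality bounds the form below by `3 / 4 * B v v ^ 2`.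
theorem hermite_inequality {n : ℕ} (b : Basis (Fin (n + 1)) ℤ M) (hsymm : B.IsSymm)
    (hB : B.toQuadraticMap.PosDef) {v : M} (hv : IsPrimitiveVector ℤ v)
    (hmin : ∀ w, IsPrimitiveVector ℤ w → B v v ≤ B w w) :
    3 ^ (n + 1).choose 2 * B v v ^ (n + 1) ≤
      4 ^ (n + 1).choose 2 * (toMatrix b B).det := by
  induction n generalizing M with
  | zero => simpa using hmin _ (isPrimitiveVector_basis b 0)
  | succ n ih =>
    have hvpos : 0 < B v v := hB v hv.ne_zero
    obtain ⟨f, hf⟩ := hv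
    have := Module.Free.of_basis b
    obtain ⟨c⟩ := nonempty_basis_ker b hf
    have hC := posDef_restrict_schurForm hsymm hB hf
    obtain ⟨w, hw, hwmin⟩ :=
      exists_isPrimitiveVector_forall_le hC ⟨c 0, isPrimitiveVector_basis c 0⟩
    have hbound := ih c ((isSymm_schurForm hsymm v).restrict _) hC hw hwmin
    have hstep : 3 * B v v ^ 2 ≤ 4 * schurForm B v w w :=
      three_mul_sq_le_of_forall_le hsymm hB hf hmin hw
    have hdet := apply_mul_det_toMatrix_schurForm B hf c
    rw [det_toMatrix_eq_det_toMatrix B _ b] at hdet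
    rw [LinearMap.BilinForm.restrict_apply, LinearMap.domRestrict_apply] at hbound
    set D := (toMatrix b B).det
    set D' := (toMatrix c ((schurForm B v).restrict (ker f))).det
    set m := B v v
    set s := schurForm B v w w
    set e := (n + 1).choose 2
    have he : (n + 2).choose 2 = n + 1 + e := by
      rw [Nat.choose_succ_succ' (n + 1) 1, Nat.choose_one_right]
    rw [he]
    refine le_of_mul_le_mul_left ?_ (pow_pos hvpos (n + 1))
    calc m ^ (n + 1) * (3 ^ (n + 1 + e) * m ^ (n + 2))
        = m * (3 ^ e * (3 * m ^ 2) ^ (n + 1)) := by ring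
      _ ≤ m * (3 ^ e * (4 * s) ^ (n + 1)) := by gcongr
      _ = m * 4 ^ (n + 1) * (3 ^ e * s ^ (n + 1)) := by ring
      _ ≤ m * 4 ^ (n + 1) * (4 ^ e * D') := by gcongr
      _ = 4 ^ (n + 1 + e) * (m * D') := by ring
      _ = m ^ (n + 1) * (4 ^ (n + 1 + e) * D) := by rw [hdet]; ring

theorem exists_apply_self_eq_one {n : ℕ} (hn : n < 5) (b : Basis (Fin (n + 1)) ℤ M)
    (hsymm : B.IsSymm) (hB : B.toQuadraticMap.PosDef) (hdet : (toMatrix b B).det = 1) :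
    ∃ v, B v v = 1 := by
  obtain ⟨v, hv, hmin⟩ := exists_isPrimitiveVector_forall_le hB ⟨b 0, isPrimitiveVector_basis b 0⟩
  have hpos : 0 < B v v := hB v hv.ne_zero
  refine ⟨v, le_antisymm ?_ hpos⟩
  by_contra! hlt
  have htwo : 2 ^ (n + 1) ≤ B v v ^ (n + 1) := by gcongr; omega
  have hbound := hermite_inequality b hsymm hB hv hmin
  rw [hdet] at hbound
  -- In rank `r ≤ 5`, `(4 / 3) ^ (r * (r - 1) / 2) < 2 ^ r`.
  interval_cases n <;> norm_num [Nat.choose] at htwo hbound <;> linarith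

theorem exists_basis_toMatrix_eq_one {n : ℕ} (hn : n ≤ 5) (b : Basis (Fin n) ℤ M)
    (hsymm : B.IsSymm) (hB : B.toQuadraticMap.PosDef) (hdet : (toMatrix b B).det = 1) :
    ∃ e : Basis (Fin n) ℤ M, toMatrix e B = 1 := by
  induction n generalizing M with
  | zero => exact ⟨b, Subsingleton.elim _ _⟩
  | succ n ih =>
    obtain ⟨v, hv⟩ := exists_apply_self_eq_one hn b hsymm hB hdet
    obtain ⟨c⟩ := nonempty_basis_ker b hv
    have hrestrict : (schurForm B v).restrict (ker (B v)) = B.restrict (ker (B v)) := by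
      ext x y
      simp [schurForm_apply, hv]
    have hdet_c : (toMatrix c (B.restrict (ker (B v)))).det = 1 := by
      have h := apply_mul_det_toMatrix_schurForm B hv c
      rwa [det_toMatrix_eq_det_toMatrix B _ b, hdet, hrestrict, hv, one_pow, one_mul, one_mul] at h
    obtain ⟨e, he⟩ := ih (by omega) c (hsymm.restrict _)
      (fun x hx ↦ hB x (by simpa using hx)) hdet_c
    refine ⟨basisConsKer hv e, Matrix.ext fun i j ↦ ?_⟩
    have he_apply (i j) : B (e i) (e j) = (1 : Matrix (Fin n) (Fin n) ℤ) i j := by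
      simp [← he]
    cases i using Fin.cases <;> cases j using Fin.cases <;>
      simp [hv, hsymm.eq _ v, he_apply, Matrix.one_apply, Fin.succ_ne_zero,
        (Fin.succ_ne_zero _).symm]

theorem exists_apply_self_eq_sum_sq {n : ℕ} (hn : n ≤ 5) (b : Basis (Fin n) ℤ M)
    (hsymm : B.IsSymm) (hB : B.toQuadraticMap.PosDef) (hdet : (toMatrix b B).det = 1)
    (x : M) : ∃ c : Fin n → ℤ, B x x = ∑ i, c i ^ 2 := by
  obtain ⟨e, he⟩ := exists_basis_toMatrix_eq_one hn b hsymm hB hdet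
  refine ⟨e.repr x, ?_⟩
  rw [LinearMap.BilinForm.apply_eq_dotProduct_toMatrix_mulVec e, he, Matrix.one_mulVec]
  simp [dotProduct, sq]

end IntegralLattice

section SumThreeSquares

/-- The Gram matrix of a ternary form that takes the value `n` at the third basis vector. It has
determinant `1` when `t ^ 2 + d = a * b` and `b + 1 = d * n`. -/
def ternaryGram (a b n t : ℤ) : Matrix (Fin 3) (Fin 3) ℤ :=
  !![a, t, 1; t, b, 0; 1, 0, n]

theorem toBilin'_ternaryGram_apply_self (a b n t : ℤ) (x : Fin 3 → ℤ) :
    (ternaryGram a b n t).toBilin' x x =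
      a * x 0 ^ 2 + b * x 1 ^ 2 + n * x 2 ^ 2 + 2 * t * (x 0 * x 1) + 2 * (x 0 * x 2) := by
  simp only [ternaryGram, Matrix.toBilin'_apply, Matrix.of_apply, Matrix.cons_val,
    Fin.sum_univ_three]
  ring

theorem posDef_toBilin'_ternaryGram {a b d n t : ℤ} (hd : 0 < d) (hb : 0 < b)
    (hbn : b + 1 = d * n) (ht : t ^ 2 + d = a * b) :
    (ternaryGram a b n t).toBilin'.toQuadraticMap.PosDef := by
  intro x hx
  rw [LinearMap.BilinMap.toQuadraticMap_apply]
  have hsquares : b * d * (ternaryGram a b n t).toBilin' x x =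
      d * (b * x 1 + t * x 0) ^ 2 + (d * x 0 + b * x 2) ^ 2 + b * x 2 ^ 2 := by
    rw [toBilin'_ternaryGram_apply_self]
    linear_combination -d * x 0 ^ 2 * ht - b * x 2 ^ 2 * hbn
  refine pos_of_mul_pos_right (a := b * d) ?_ (by positivity)
  rw [hsquares]
  by_cases h2 : x 2 = 0
  · by_cases h0 : x 0 = 0
    · have h1 : x 1 ≠ 0 := fun h1 ↦ hx <| by ext i; fin_cases i <;> assumption
      simp only [h0, h2, mul_zero, add_zero, zero_pow two_ne_zero]
      positivity
    · simp only [h2, mul_zero, add_zero, zero_pow two_ne_zero]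
      positivity
  · positivity

theorem exists_eq_sum_three_sq_of_sq_add_eq {a b d n t : ℤ} (hd : 0 < d) (hb : 0 < b)
    (hbn : b + 1 = d * n) (ht : t ^ 2 + d = a * b) :
    ∃ x y z : ℤ, n = x ^ 2 + y ^ 2 + z ^ 2 := by
  have hsymm : (ternaryGram a b n t).toBilin'.IsSymm := by
    rw [Matrix.isSymm_toBilin'_iff_isSymm]
    ext i j
    fin_cases i <;> fin_cases j <;> rfl
  have hdet : (toMatrix (Pi.basisFun ℤ (Fin 3)) (ternaryGram a b n t).toBilin').det = 1 := by
    rw [LinearMap.BilinForm.toMatrix_basisFun, LinearMap.BilinForm.toMatrix'_toBilin',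
      Matrix.det_fin_three]
    simp only [ternaryGram, Matrix.of_apply, Matrix.cons_val]
    linear_combination -n * ht - hbn
  obtain ⟨c, hc⟩ := exists_apply_self_eq_sum_sq (by norm_num) (Pi.basisFun ℤ (Fin 3)) hsymm
    (posDef_toBilin'_ternaryGram hd hb hbn ht) hdet (Pi.single 2 1)
  rw [toBilin'_ternaryGram_apply_self, Fin.sum_univ_three] at hc
  exact ⟨c 0, c 1, c 2, by simpa using hc⟩

theorem jacobiSym_neg_eq_one_of_two_mul_add_one_eq {d n p : ℕ} (hd : d % 8 = 3) (hp : Odd p)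
    (h : 2 * p + 1 = d * n) : J(-(d : ℤ) | p) = 1 := by
  have hd_odd : Odd d := Nat.odd_iff.2 (by omega)
  have hneg_two : J(-2 | d) = 1 := by
    rw [jacobiSym.at_neg_two hd_odd, ZMod.χ₈'_nat_eq_if_mod_eight]
    simp [hd, Nat.odd_iff.1 hd_odd]
  have hp_d : J((p : ℤ) | d) = 1 := by
    have hmod : (-2 * p : ℤ) % d = 1 % d := by
      rw [show (-2 * p : ℤ) = 1 + d * -n by zify at h; linear_combination -h,
        Int.add_mul_emod_self_left]
    have hmul : J(-2 * (p : ℤ) | d) = 1 := by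
      rw [jacobiSym.mod_left' hmod, jacobiSym.one_left]
    rwa [jacobiSym.mul_left, hneg_two, one_mul] at hmul
  rw [← neg_one_mul, jacobiSym.mul_left, jacobiSym.at_neg_one hp]
  rcases Nat.odd_mod_four_iff.1 (Nat.odd_iff.1 hp) with hp_mod | hp_mod
  · rw [ZMod.χ₄_nat_one_mod_four hp_mod,
      ← jacobiSym.quadratic_reciprocity_one_mod_four hp_mod hd_odd, hp_d, one_mul]
  · rw [ZMod.χ₄_nat_three_mod_four hp_mod,
      jacobiSym.quadratic_reciprocity_three_mod_four (by omega) hp_mod, hp_d, neg_mul_neg, one_mul]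

theorem exists_two_mul_dvd_sq_add_of_isSquare {m : ℕ} (hm : Odd m) {d : ℤ}
    (hd : IsSquare ((-d : ℤ) : ZMod m)) : ∃ t : ℤ, 2 * (m : ℤ) ∣ t ^ 2 + d := by
  obtain ⟨u, hu⟩ := hd
  obtain ⟨s, rfl⟩ := ZMod.intCast_surjective u
  have hm_int : Odd (m : ℤ) := by exact_mod_cast hm
  have hdvd (k : ℤ) : (m : ℤ) ∣ (s + k * m) ^ 2 + d := by
    rw [← ZMod.intCast_zmod_eq_zero_iff_dvd]
    push_cast at hu ⊢
    rw [ZMod.natCast_self]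
    linear_combination -hu
  obtain ⟨k, hk⟩ : ∃ k : ℤ, Even ((s + k * m) ^ 2 + d) := by
    rcases Int.even_or_odd (s ^ 2 + d) with heven | hodd
    · exact ⟨0, by simpa using heven⟩
    · refine ⟨1, ?_⟩
      rw [show (s + 1 * m) ^ 2 + d = s ^ 2 + d + m ^ 2 + 2 * (s * m) by ring]
      exact (hodd.add_odd hm_int.pow).add (even_two_mul _)
  have hcoprime : IsCoprime (2 : ℤ) m :=
    mod_cast Nat.isCoprime_iff_coprime.2 (Nat.coprime_two_left.2 hm)
  exact ⟨s + k * m, hcoprime.mul_dvd hk.two_dvd (hdvd k)⟩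

theorem exists_prime_two_mul_add_one_eq_mul {n : ℕ} (hn : n % 4 = 1) :
    ∃ p d : ℕ, p.Prime ∧ d % 8 = 3 ∧ 2 * p + 1 = d * n := by
  obtain ⟨s, hs⟩ : ∃ s, 2 * s + 1 = 3 * n := ⟨(3 * n - 1) / 2, by omega⟩
  have hcoprime_four : s.Coprime 4 :=
    (Nat.coprime_two_right.2 (Nat.odd_iff.2 (by omega))).pow_right 2
  have hcoprime_n : s.Coprime n :=
    Nat.isCoprime_iff_coprime.1 ⟨-2, 3, by zify at hs; linear_combination -hs⟩
  obtain ⟨p, hsp, hp, hmod⟩ := Nat.forall_exists_prime_gt_and_modEq s (by omega : 4 * n ≠ 0)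
    (hcoprime_four.mul_right hcoprime_n)
  obtain ⟨j, hj⟩ := (Nat.modEq_iff_dvd' hsp.le).1 hmod.symm
  refine ⟨p, 8 * j + 3, hp, by omega, ?_⟩
  rw [show p = s + 4 * n * j by omega]
  linear_combination hs

theorem exists_eq_sum_three_sq_of_mod_four_eq_one {n : ℕ} (hn : n % 4 = 1) :
    ∃ x y z : ℕ, n = x ^ 2 + y ^ 2 + z ^ 2 := by
  obtain ⟨p, d, hp, hd, hpd⟩ := exists_prime_two_mul_add_one_eq_mul hn
  have := Fact.mk hp
  have hp_odd : Odd p := by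
    have : d * n % 4 = 3 := by rw [Nat.mul_mod, hn, show d % 4 = 3 by omega]
    exact Nat.odd_iff.2 (by omega)
  obtain ⟨t, a, ht⟩ := exists_two_mul_dvd_sq_add_of_isSquare hp_odd
    (ZMod.isSquare_of_jacobiSym_eq_one (jacobiSym_neg_eq_one_of_two_mul_add_one_eq hd hp_odd hpd))
  obtain ⟨x, y, z, h⟩ := exists_eq_sum_three_sq_of_sq_add_eq (b := 2 * p) (d := d) (n := n)
    (by omega) (mul_pos two_pos (mod_cast hp.pos)) (mod_cast hpd) (ht.trans (mul_comm _ _))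
  exact ⟨x.natAbs, y.natAbs, z.natAbs, by zify; simpa only [sq_abs] using h⟩

theorem sq_mod_four_eq_mod_two (x : ℕ) : x ^ 2 % 4 = x % 2 := by
  rcases Nat.even_or_odd' x with ⟨k, rfl | rfl⟩ <;> ring_nf <;> omega

end SumThreeSquares

theorem stmt_15 (m : ℕ) :
    ∃ a b c : ℕ, 4 * m + 1 = a ^ 2 + b ^ 2 + c ^ 2 ∧ Even a ∧ b % 2 ≠ c % 2 := by
  obtain ⟨x, y, z, h⟩ := exists_eq_sum_three_sq_of_mod_four_eq_one (n := 4 * m + 1) (by omega)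
  have hmod : (x % 2 + y % 2 + z % 2) % 4 = 1 := by
    simp only [← sq_mod_four_eq_mod_two]
    omega
  rcases Nat.even_or_odd x with hx | hx
  · have := Nat.even_iff.1 hx
    exact ⟨x, y, z, h, hx, by omega⟩
  · have := Nat.odd_iff.1 hx
    exact ⟨y, x, z, by omega, Nat.even_iff.2 (by omega), by omega⟩
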